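/- arXiv:2410.00554 — 2 statements merged into one kernel-verified Lean document; each statement's English description precedes it below -/
import Mathlib

section
/- Let d ≥ 2, k ≥ 2, 1 ≤ t ≤ k, let S_k be the cyclic-shift unitary on (ℂ^d)^{⊗k} with S_k(v_1 ⊗ ⋯ ⊗ v_k) = v_k ⊗ v_1 ⊗ ⋯ ⊗ v_{k-1}, and D_k = (I + S_k)/2. Let Ω and σ be Hermitian d×d matrices with Ωσ = σΩ and tr(σ) = 1. Then tr[(Ω^{⊗t} ⊗ I^{⊗(k−t)}) · D_k σ^{⊗k} D_k†] = (1/2)·(tr(Ωσ))^t + (1/2)·tr((Ωσ)^t σ^{k−t}). -/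
open Matrix Kronecker BigOperators

noncomputable section

/-- The cyclically previous index: `m - 1 (mod k)`. -/
def prevIdx {k : ℕ} (m : Fin k) : Fin k :=
  ⟨(m.val + (k - 1)) % k, Nat.mod_lt _ m.pos⟩

/-- The cyclic-shift unitary `S_k` on `(ℂ^d)^{⊗k}`, determined by
`S_k (v_1 ⊗ ⋯ ⊗ v_k) = v_k ⊗ v_1 ⊗ ⋯ ⊗ v_{k-1}`, written as a matrix in the
standard tensor-product basis indexed by functions `Fin k → Fin d`. -/
def cyc (d k : ℕ) : Matrix (Fin k → Fin d) (Fin k → Fin d) ℂ :=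
  fun g f => if g = fun m => f (prevIdx m) then 1 else 0

/-- The SWAP projection `D_k = (I + S_k)/2`. -/
def Dk (d k : ℕ) : Matrix (Fin k → Fin d) (Fin k → Fin d) ℂ :=
  (1 / 2 : ℂ) • (1 + cyc d k)

/-- The tensor product `A_1 ⊗ A_2 ⊗ ⋯ ⊗ A_k` of `d × d` matrices, acting
factor-wise on `(ℂ^d)^{⊗k}`. -/
def tensOp {d k : ℕ} (A : Fin k → Matrix (Fin d) (Fin d) ℂ) :
    Matrix (Fin k → Fin d) (Fin k → Fin d) ℂ :=
  fun g f => ∏ m, A m (g m) (f m)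

/-- The tensor product `v_1 ⊗ ⋯ ⊗ v_k` of vectors in `ℂ^d`. -/
def tensVec {d k : ℕ} (v : Fin k → (Fin d → ℂ)) : (Fin k → Fin d) → ℂ :=
  fun f => ∏ m, v m (f m)

/-- The partial trace over the last `k - 1` tensor factors, mapping matrices on
`(ℂ^d)^{⊗k}` to `d × d` matrices by tracing out factors `2` through `k`. -/
def ptraceFirst {d k : ℕ} (M : Matrix (Fin k → Fin d) (Fin k → Fin d) ℂ) :
    Matrix (Fin d) (Fin d) ℂ :=
  fun a b => ∑ r : {i : Fin k // i.val ≠ 0} → Fin d,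
    M (fun m => if h : m.val = 0 then a else r ⟨m, h⟩)
      (fun m => if h : m.val = 0 then b else r ⟨m, h⟩)

def pathM {d : ℕ} (C : ℕ → Matrix (Fin d) (Fin d) ℂ) : ℕ → Matrix (Fin d) (Fin d) ℂ
  | 0 => 1
  | n + 1 => C n * pathM C n

lemma path_sum {d : ℕ} (C : ℕ → Matrix (Fin d) (Fin d) ℂ) (n : ℕ) :
    ∀ F : Fin d → Fin d → ℂ,
    ∑ h : Fin (n + 1) → Fin d, F (h 0) (h (Fin.last n)) *
      ∏ i : Fin n, C i.val (h i.succ) (h i.castSucc)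
      = ∑ a, ∑ b, F a b * pathM C n b a := by
  induction n with
  | zero =>
    intro F
    rw [← (Equiv.funUnique (Fin 1) (Fin d)).symm.sum_comp]
    simp [pathM, Matrix.one_apply]
  | succ n ih =>
    intro F
    rw [← (Fin.snocEquiv (fun _ : Fin (n + 2) => Fin d)).sum_comp, Fintype.sum_prod_type,
      Finset.sum_comm]
    have := ih (fun a b => ∑ c, F a c * C n c b)
    have e : ∀ h : Fin (n + 1) → Fin d, ∀ c : Fin d,
      (Fin.snocEquiv (fun _ : Fin (n + 2) => Fin d)) (c, h)
        = (Fin.snoc h c : Fin (n + 2) → Fin d) := fun _ _ => rfl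
    have e0 : ∀ h : Fin (n + 1) → Fin d, ∀ c : Fin d,
      (Fin.snoc h c : Fin (n + 2) → Fin d) 0 = h 0 := by
      intro h c
      exact Fin.snoc_castSucc (α := fun _ : Fin (n + 2) => Fin d) c h 0
    simp only [e, e0, Fin.prod_univ_castSucc, Fin.snoc_last, Fin.snoc_castSucc,
      Fin.succ_last, Fin.succ_castSucc, Fin.val_castSucc, Fin.val_last]
    calc _ = ∑ h : Fin (n + 1) → Fin d, (∑ c, F (h 0) c * C n c (h (Fin.last n))) *
      ∏ i : Fin n, C i.val (h i.succ) (h i.castSucc) := by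
          refine Finset.sum_congr rfl fun h _ => ?_
          rw [Finset.sum_mul]
          refine Finset.sum_congr rfl fun c _ => ?_
          ring
      _ = _ := by
          rw [this]
          refine Finset.sum_congr rfl fun a _ => ?_
          simp only [pathM, Matrix.mul_apply, Finset.mul_sum, Finset.sum_mul]
          rw [Finset.sum_comm]
          refine Finset.sum_congr rfl fun c _ => ?_
          refine Finset.sum_congr rfl fun b _ => ?_
          ring

lemma pathM_le {d : ℕ} (P Q : Matrix (Fin d) (Fin d) ℂ) (s : ℕ) : ∀ n, n ≤ s →
    pathM (fun m => if m + 1 < s + 1 then P else Q) n = P ^ n := by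
  intro n
  induction n with
  | zero => intro _; simp [pathM]
  | succ n ih =>
    intro h
    rw [pathM, ih (by omega), if_pos (by omega), pow_succ']

lemma pathM_add {d : ℕ} (P Q : Matrix (Fin d) (Fin d) ℂ) (s : ℕ) : ∀ n,
    pathM (fun m => if m + 1 < s + 1 then P else Q) (s + n) = Q ^ n * P ^ s := by
  intro n
  induction n with
  | zero => rw [add_zero, pathM_le P Q s s le_rfl, pow_zero, one_mul]
  | succ n ih =>
    rw [← add_assoc, pathM, ih, if_neg (by omega), pow_succ', mul_assoc]

lemma prevIdx_zero (n : ℕ) : prevIdx (0 : Fin (n + 1)) = Fin.last n := by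
  ext; simp [prevIdx]

lemma prevIdx_succ (n : ℕ) (i : Fin n) : prevIdx i.succ = i.castSucc := by
  ext
  simp only [prevIdx, Fin.val_succ, Fin.val_castSucc]
  have := i.isLt
  rw [show i.val + 1 + (n + 1 - 1) = i.val + (n + 1) by omega, Nat.add_mod_right,
    Nat.mod_eq_of_lt (by omega)]

lemma prevIdx_bij (k : ℕ) : Function.Bijective (prevIdx : Fin k → Fin k) := by
  rw [← Finite.injective_iff_bijective]
  rcases k with _ | n
  · intro a; exact a.elim0
  intro a b
  induction a using Fin.cases with
  | zero =>
    induction b using Fin.cases with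
    | zero => simp
    | succ b =>
      rw [prevIdx_zero, prevIdx_succ]
      intro h; exact absurd h.symm (Fin.castSucc_lt_last b).ne
  | succ a =>
    induction b using Fin.cases with
    | zero =>
      rw [prevIdx_zero, prevIdx_succ]
      intro h; exact absurd h (Fin.castSucc_lt_last a).ne
    | succ b =>
      rw [prevIdx_succ, prevIdx_succ]
      intro h; rw [Fin.castSucc_injective _ h]

lemma trace_cyc {d k t : ℕ} (ht1 : 1 ≤ t) (ht2 : t ≤ k) (P Q : Matrix (Fin d) (Fin d) ℂ) :
    (tensOp (fun m : Fin k => if m.val < t then P else Q) * cyc d k).trace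
      = (P ^ t * Q ^ (k - t)).trace := by
  obtain ⟨s, rfl⟩ : ∃ s, t = s + 1 := ⟨t - 1, by omega⟩
  obtain ⟨r, rfl⟩ : ∃ r, k = s + r + 1 := ⟨k - (s + 1), by omega⟩
  have h := path_sum (fun m => if m + 1 < s + 1 then P else Q) (s + r) (fun a b => P a b)
  rw [pathM_add] at h
  have e : s + r + 1 - (s + 1) = r := by omega
  rw [e]
  calc _ = _ := ?_
    _ = _ := h
    _ = (P * (Q ^ r * P ^ s)).trace := by
        simp only [Matrix.trace, Matrix.diag]
        exact Finset.sum_congr rfl fun a _ => (Matrix.mul_apply).symm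
    _ = _ := by rw [← mul_assoc, Matrix.trace_mul_comm, ← mul_assoc, ← pow_succ]
  simp only [Matrix.trace, Matrix.diag, Matrix.mul_apply, cyc, tensOp, mul_ite, mul_one, mul_zero]
  refine Finset.sum_congr rfl fun g _ => ?_
  rw [Finset.sum_ite_eq' Finset.univ (fun m => g (prevIdx m)), if_pos (Finset.mem_univ _),
    Fin.prod_univ_succ]
  beta_reduce
  rw [prevIdx_zero, if_pos (show ((0 : Fin (s + r + 1)) : ℕ) < s + 1 from Nat.succ_pos s)]
  congr 1
  refine Finset.prod_congr rfl fun i _ => ?_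
  rw [prevIdx_succ, Fin.val_succ]

lemma tensOp_mul {d k : ℕ} (A B : Fin k → Matrix (Fin d) (Fin d) ℂ) :
    tensOp A * tensOp B = tensOp (fun m => A m * B m) := by
  ext g f
  simp only [Matrix.mul_apply, tensOp, ← Finset.prod_mul_distrib]
  rw [Finset.prod_univ_sum, Fintype.piFinset_univ]

lemma trace_tensOp {d k : ℕ} (A : Fin k → Matrix (Fin d) (Fin d) ℂ) :
    (tensOp A).trace = ∏ m, (A m).trace := by
  simp only [Matrix.trace, Matrix.diag, tensOp]
  rw [Finset.prod_univ_sum, Fintype.piFinset_univ]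

def prevE (k : ℕ) : Fin k ≃ Fin k := Equiv.ofBijective prevIdx (prevIdx_bij k)

lemma cyc_eq (d k : ℕ) : cyc d k =
    (1 : Matrix (Fin k → Fin d) (Fin k → Fin d) ℂ).submatrix id
      (Equiv.arrowCongr (prevE k).symm (Equiv.refl (Fin d))) := by
  ext g f
  simp only [cyc, Matrix.submatrix_apply, Matrix.one_apply]
  rfl

lemma cyc_mul_H (d k : ℕ) : cyc d k * (cyc d k)ᴴ = 1 := by
  rw [cyc_eq, Matrix.conjTranspose_submatrix, Matrix.submatrix_mul_equiv]
  simp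

lemma cyc_comm {d k : ℕ} (σ : Matrix (Fin d) (Fin d) ℂ) :
    cyc d k * tensOp (fun _ => σ) = tensOp (fun _ => σ) * cyc d k := by
  have h : tensOp (fun _ : Fin k => σ) = (tensOp (fun _ : Fin k => σ)).submatrix
      (Equiv.arrowCongr (prevE k).symm (Equiv.refl (Fin d)))
      (Equiv.arrowCongr (prevE k).symm (Equiv.refl (Fin d))) := by
    ext g f
    simp only [Matrix.submatrix_apply, tensOp]
    exact ((prevE k).prod_comp (fun m => σ (g m) (f m))).symm
  conv_lhs => rw [h, cyc_eq, Matrix.submatrix_mul_equiv, one_mul]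
  rw [cyc_eq]
  conv_rhs => rw [← Matrix.submatrix_id_id (tensOp (fun _ : Fin k => σ))]
  rw [← Matrix.submatrix_mul _ _ _ _ _ Function.bijective_id, mul_one]

lemma cyc_HT (d k : ℕ) : ((cyc d k)ᴴ)ᵀ = cyc d k := by
  ext g f
  simp only [Matrix.transpose_apply, Matrix.conjTranspose_apply, cyc]
  split_ifs <;> simp

lemma tensOp_T {d k : ℕ} (A : Fin k → Matrix (Fin d) (Fin d) ℂ) :
    (tensOp A)ᵀ = tensOp (fun m => (A m)ᵀ) := rfl

/-- For commuting Hermitian `Ω`, `σ` with `tr σ = 1`,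
`tr[(Ω^{⊗t} ⊗ I^{⊗(k−t)}) · D_k σ^{⊗k} D_k†]
  = (1/2)(tr(Ωσ))^t + (1/2) tr((Ωσ)^t σ^{k−t})`. -/
theorem stmt7 (d k t : ℕ) (hd : 2 ≤ d) (hk : 2 ≤ k) (ht1 : 1 ≤ t) (ht2 : t ≤ k)
    (Ω σ : Matrix (Fin d) (Fin d) ℂ) (hΩ : Ω.IsHermitian) (hσ : σ.IsHermitian)
    (hcomm : Ω * σ = σ * Ω) (htr : σ.trace = 1) :
    (tensOp (fun m : Fin k => if m.val < t then Ω else 1)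
        * (Dk d k * tensOp (fun _ : Fin k => σ) * (Dk d k)ᴴ)).trace
      = (1 / 2 : ℂ) * (Ω * σ).trace ^ t
        + (1 / 2 : ℂ) * ((Ω * σ) ^ t * σ ^ (k - t)).trace := by
  have hAB : tensOp (fun m : Fin k => if m.val < t then Ω else 1) * tensOp (fun _ : Fin k => σ)
      = tensOp (fun m : Fin k => if m.val < t then Ω * σ else σ) := by
    rw [tensOp_mul]
    congr 1
    funext m
    split_ifs <;> simp
  have h0 : (tensOp (fun m : Fin k => if m.val < t then Ω * σ else σ)).trace
      = (Ω * σ).trace ^ t := by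
    rw [trace_tensOp]
    have : ∀ m : Fin k, (if m.val < t then Ω * σ else σ).trace
        = if m.val < t then (Ω * σ).trace else 1 := by
      intro m; split_ifs <;> simp [htr]
    simp only [this]
    rw [Finset.prod_ite, Finset.prod_const, Finset.prod_const_one, mul_one]
    congr 1
    rw [Fin.card_filter_val_lt, min_eq_right ht2]
  have h1 := trace_cyc (k := k) ht1 ht2 (Ω * σ) σ
  have h2 : (tensOp (fun m : Fin k => if m.val < t then Ω * σ else σ) * (cyc d k)ᴴ).trace
      = ((Ω * σ) ^ t * σ ^ (k - t)).trace := by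
    rw [← Matrix.trace_transpose, Matrix.transpose_mul, cyc_HT, tensOp_T, Matrix.trace_mul_comm]
    have : ∀ m : Fin k, (if m.val < t then Ω * σ else σ)ᵀ
        = if m.val < t then (Ω * σ)ᵀ else σᵀ := by
      intro m; split_ifs <;> rfl
    simp only [this]
    rw [trace_cyc ht1 ht2, ← Matrix.transpose_pow, ← Matrix.transpose_pow,
      ← Matrix.transpose_mul, Matrix.trace_transpose, Matrix.trace_mul_comm]
  have hexp : tensOp (fun m : Fin k => if m.val < t then Ω else 1)
        * (Dk d k * tensOp (fun _ : Fin k => σ) * (Dk d k)ᴴ)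
      = (1 / 4 : ℂ) • ((2 : ℂ) • tensOp (fun m : Fin k => if m.val < t then Ω * σ else σ)
        + tensOp (fun m : Fin k => if m.val < t then Ω * σ else σ) * cyc d k
        + tensOp (fun m : Fin k => if m.val < t then Ω * σ else σ) * (cyc d k)ᴴ) := by
    have hD : Dk d k * tensOp (fun _ : Fin k => σ) = tensOp (fun _ : Fin k => σ) * Dk d k := by
      simp [Dk, add_mul, mul_add, cyc_comm]
    rw [hD, mul_assoc (tensOp fun _ => σ), ← mul_assoc, hAB]
    have hDD : Dk d k * (Dk d k)ᴴ = (1 / 4 : ℂ) • ((2 : ℂ) • 1 + cyc d k + (cyc d k)ᴴ) := by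
      simp only [Dk, Matrix.conjTranspose_smul, Matrix.conjTranspose_add,
        Matrix.conjTranspose_one, smul_mul_smul_comm, add_mul, mul_add, cyc_mul_H, one_mul, mul_one]
      have : (1 / 2 : ℂ) * star (1 / 2 : ℂ) = 1 / 4 := by simp; norm_num
      rw [this, two_smul]
      congr 1
      abel
    rw [hDD]
    simp [mul_add]
  rw [hexp]
  simp only [Matrix.trace_smul, Matrix.trace_add, h0, h1, h2, smul_eq_mul]
  ring
end
end

section
/- Let d ≥ 2, k ≥ 2, 1 ≤ t ≤ k, let ψ, ψ⊥ ∈ ℂ^d be orthonormal vectors, let Ω = |ψ⟩⟨ψ| + λ(I − |ψ⟩⟨ψ|) with λ ∈ [0,1), and for ε ∈ [0,1] let σ_mix = (1−ε)|ψ⟩⟨ψ| + ε|ψ⊥⟩⟨ψ⊥|. With S_k the cyclic-shift unitary on (ℂ^d)^{⊗k} and D_k = (I + S_k)/2, the passing probability satisfies tr[(Ω^{⊗t} ⊗ I^{⊗(k−t)}) · D_k σ_mix^{⊗k} D_k†] = (1/2)[(1 − (1−λ)ε)^t + (1−ε)^k + λ^t ε^k]. -/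
open Matrix Kronecker BigOperators

noncomputable section

lemma prevIdx_val {k : ℕ} (m : Fin k) :
    (prevIdx m).val = if m.val = 0 then k - 1 else m.val - 1 := by
  have hm := m.isLt
  unfold prevIdx
  split_ifs with h
  · simp only [h, zero_add]; exact Nat.mod_eq_of_lt (by omega)
  · have : m.val + (k - 1) = (m.val - 1) + k := by omega
    simp only [this, Nat.add_mod_right]
    exact Nat.mod_eq_of_lt (by omega)

lemma prevIdx_inj {k : ℕ} : Function.Injective (prevIdx (k := k)) := by
  intro a b hab
  have h := congrArg Fin.val hab
  rw [prevIdx_val, prevIdx_val] at h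
  have ha := a.isLt
  have hb := b.isLt
  apply Fin.ext
  split_ifs at h <;> omega

def prevEquiv (k : ℕ) : Fin k ≃ Fin k :=
  Equiv.ofBijective prevIdx (Finite.injective_iff_bijective.mp prevIdx_inj)

lemma prev_const {k : ℕ} (hk : 0 < k) {α : Type*} (s : Fin k → α)
    (h : ∀ m, s (prevIdx m) = s m) : ∀ m, s m = s ⟨0, hk⟩ := by
  rintro ⟨m, hm⟩
  induction m with
  | zero => rfl
  | succ n ih =>
    rw [← ih (by omega), ← h ⟨n + 1, hm⟩]
    congr 1
    apply Fin.ext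
    rw [prevIdx_val]; simp

def permM (d : ℕ) {k : ℕ} (e : Fin k ≃ Fin k) : Matrix (Fin k → Fin d) (Fin k → Fin d) ℂ :=
  fun g f => if g = fun m => f (e m) then 1 else 0

lemma cyc_eq_s14 (d k : ℕ) : cyc d k = permM d (prevEquiv k) := rfl

lemma flip_iff {d k : ℕ} (e : Fin k ≃ Fin k) (g f : Fin k → Fin d) :
    (g = fun m => f (e m)) ↔ (f = fun m => g (e.symm m)) := by
  constructor
  · rintro rfl; funext m; simp
  · rintro rfl; funext m; simp

lemma permM_H (d : ℕ) {k : ℕ} (e : Fin k ≃ Fin k) : (permM d e)ᴴ = permM d e.symm := by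
  ext g f
  simp only [conjTranspose_apply, permM]
  simp only [flip_iff e f g]
  split_ifs <;> simp

lemma mul_permM {d k : ℕ} (e : Fin k ≃ Fin k) (M : Matrix (Fin k → Fin d) (Fin k → Fin d) ℂ)
    (g h : Fin k → Fin d) : (M * permM d e) g h = M g (fun m => h (e m)) := by
  simp [mul_apply, permM]

lemma permM_mul {d k : ℕ} (e : Fin k ≃ Fin k) (M : Matrix (Fin k → Fin d) (Fin k → Fin d) ℂ)
    (g h : Fin k → Fin d) : (permM d e * M) g h = M (fun m => g (e.symm m)) h := by
  simp [mul_apply, permM, flip_iff e g]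

lemma permM_inv {d k : ℕ} (e : Fin k ≃ Fin k) : permM d e * permM d e.symm = 1 := by
  ext g h
  rw [mul_permM]
  simp [permM, one_apply]

lemma permM_one {d k : ℕ} : permM d (Equiv.refl (Fin k)) = 1 := by
  ext g h
  simp only [permM, one_apply, Equiv.refl_apply]
  rfl

lemma permM_comm {d k : ℕ} (e : Fin k ≃ Fin k) (σ : Matrix (Fin d) (Fin d) ℂ) :
    permM d e * tensOp (fun _ : Fin k => σ) = tensOp (fun _ : Fin k => σ) * permM d e := by
  ext g h
  rw [mul_permM, permM_mul]
  unfold tensOp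
  rw [← Equiv.prod_comp e]
  simp

lemma trace_key {d k : ℕ} (e : Fin k ≃ Fin k) (v : Bool → Fin d → ℂ)
    (hv : ∀ a b, star (v a) ⬝ᵥ v b = if a = b then 1 else 0)
    (c : Fin k → Bool → ℂ) (A : Fin k → Matrix (Fin d) (Fin d) ℂ)
    (hA : ∀ m, A m = ∑ b, c m b • vecMulVec (v b) (star (v b))) :
    (tensOp A * permM d e).trace
      = ∑ s : Fin k → Bool, if ∀ m, s (e m) = s m then ∏ m, c m (s m) else 0 := by
  have h1 : ∀ g : Fin k → Fin d, (tensOp A * permM d e) g g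
      = ∑ s : Fin k → Bool, (∏ m, c m (s m)) *
          ∏ m, (star (v (s (e.symm m))) (g m) * v (s m) (g m)) := by
    intro g
    rw [mul_permM]
    simp only [tensOp, hA, Matrix.sum_apply, Matrix.smul_apply, vecMulVec_apply, smul_eq_mul]
    rw [Finset.prod_univ_sum, Fintype.piFinset_univ]
    refine Finset.sum_congr rfl fun s _ => ?_
    simp only [Finset.prod_mul_distrib]
    rw [← Equiv.prod_comp e (fun m => star (v (s (e.symm m))) (g m))]
    simp only [Equiv.symm_apply_apply]
    ring
  simp only [trace, diag_apply, h1]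
  rw [Finset.sum_comm]
  refine Finset.sum_congr rfl fun s _ => ?_
  rw [← Finset.mul_sum]
  have h2 : ∑ g : Fin k → Fin d, ∏ m, (star (v (s (e.symm m))) (g m) * v (s m) (g m))
      = ∏ m, (star (v (s (e.symm m))) ⬝ᵥ v (s m)) := by
    simp only [dotProduct]
    rw [Finset.prod_univ_sum, Fintype.piFinset_univ]
  rw [h2]
  simp only [hv]
  rw [← Equiv.prod_comp e (fun m => if s (e.symm m) = s m then (1 : ℂ) else 0)]
  simp only [Equiv.symm_apply_apply]
  split_ifs with h
  · simp [h]
  · push Not at h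
    obtain ⟨m, hm⟩ := h
    refine mul_eq_zero_of_right _ (Finset.prod_eq_zero (Finset.mem_univ m) ?_)
    rw [if_neg (Ne.symm hm)]

lemma sum_const {k : ℕ} (hk : 0 < k) (e : Fin k ≃ Fin k)
    (he : ∀ s : Fin k → Bool, (∀ m, s (e m) = s m) → ∀ m, s m = s ⟨0, hk⟩)
    (c : Fin k → Bool → ℂ) :
    (∑ s : Fin k → Bool, if ∀ m, s (e m) = s m then ∏ m, c m (s m) else 0)
      = ∑ b, ∏ m, c m b := by
  rw [← Finset.sum_filter]
  symm
  refine Finset.sum_bij' (fun b _ => fun _ => b) (fun s _ => s ⟨0, hk⟩) ?_ ?_ ?_ ?_ ?_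
  · simp
  · simp
  · simp
  · intro s hs
    funext m
    simp only [Finset.mem_filter] at hs
    exact (he s hs.2 m).symm
  · simp

lemma prod_ite_lt {k t : ℕ} (ht : t ≤ k) (x y : ℂ) :
    ∏ m : Fin k, (if m.val < t then x else y) = x ^ t * y ^ (k - t) := by
  rw [Fin.prod_univ_eq_prod_range (fun i => if i < t then x else y) k]
  obtain ⟨j, rfl⟩ := Nat.exists_eq_add_of_le ht
  rw [Finset.prod_range_add]
  simp only [add_lt_iff_neg_left, not_lt_zero, if_false, Finset.prod_const, Finset.card_range,
    Nat.add_sub_cancel_left]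
  congr 1
  rw [Finset.prod_congr rfl (fun i hi => if_pos (Finset.mem_range.mp hi))]
  simp

/-- for `σ_mix = (1−ε)|ψ⟩⟨ψ| + ε|ψ⊥⟩⟨ψ⊥|` with `ψ, ψ⊥` orthonormal
and `Ω = |ψ⟩⟨ψ| + λ(I − |ψ⟩⟨ψ|)`, the passing probability is
`tr[(Ω^{⊗t} ⊗ I^{⊗(k−t)}) · D_k σ_mix^{⊗k} D_k†]
  = (1/2)[(1−(1−λ)ε)^t + (1−ε)^k + λ^t ε^k]`. -/
theorem stmt14 (d k t : ℕ) (hd : 2 ≤ d) (hk : 2 ≤ k) (ht1 : 1 ≤ t) (ht2 : t ≤ k)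
    (ψ ψp : Fin d → ℂ) (hψ : star ψ ⬝ᵥ ψ = 1) (hψp : star ψp ⬝ᵥ ψp = 1)
    (horth : star ψ ⬝ᵥ ψp = 0)
    (lam ε : ℝ) (hlam0 : 0 ≤ lam) (hlam1 : lam < 1) (hε0 : 0 ≤ ε) (hε1 : ε ≤ 1)
    (Ω σ : Matrix (Fin d) (Fin d) ℂ)
    (hΩ : Ω = vecMulVec ψ (star ψ) + (lam : ℂ) • (1 - vecMulVec ψ (star ψ)))
    (hσ : σ = ((1 - ε : ℝ) : ℂ) • vecMulVec ψ (star ψ)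
        + ((ε : ℝ) : ℂ) • vecMulVec ψp (star ψp)) :
    (tensOp (fun m : Fin k => if m.val < t then Ω else 1)
        * (Dk d k * tensOp (fun _ : Fin k => σ) * (Dk d k)ᴴ)).trace
      = (1 / 2 : ℂ) * (((1 - (1 - lam) * ε) ^ t + (1 - ε) ^ k
          + lam ^ t * ε ^ k : ℝ) : ℂ) := by
  have horth' : star ψp ⬝ᵥ ψ = 0 := by
    rw [star_dotProduct, horth, star_zero]
  let v : Bool → Fin d → ℂ := fun b => if b then ψp else ψ
  have hv : ∀ a b, star (v a) ⬝ᵥ v b = if a = b then 1 else 0 := by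
    intro a b
    cases a <;> cases b <;> simp [v, hψ, hψp, horth, horth']
  let c : Fin k → Bool → ℂ := fun m b =>
    if b then (if m.val < t then (lam : ℂ) * ε else ε) else (1 - ε)
  let A : Fin k → Matrix (Fin d) (Fin d) ℂ := fun m => (if m.val < t then Ω else 1) * σ
  have hΩσ : Ω * σ = (1 - ε : ℂ) • vecMulVec ψ (star ψ)
      + ((lam : ℂ) * ε) • vecMulVec ψp (star ψp) := by
    rw [hΩ, hσ]
    simp only [add_mul, mul_add, sub_mul, smul_mul_assoc, mul_smul_comm, one_mul,
      vecMulVec_mul_vecMulVec, hψ, horth, smul_sub, smul_add, one_smul, zero_smul,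
      smul_zero, vecMulVec_zero, smul_smul]
    push_cast
    simp [mul_comm]
  have hA : ∀ m, A m = ∑ b, c m b • vecMulVec (v b) (star (v b)) := by
    intro m
    by_cases h : m.val < t
    · simp [A, c, v, h, hΩσ, add_comm]
    · simp [A, c, v, h, hσ, add_comm]
  have hk0 : 0 < k := by omega
  have hS := trace_key (prevEquiv k) v hv c A hA
  have hS' := trace_key (prevEquiv k).symm v hv c A hA
  have h1 := trace_key (Equiv.refl _) v hv c A hA
  rw [sum_const hk0 _ (fun s hs => prev_const hk0 s hs)] at hS
  rw [sum_const hk0 _ (fun s hs => prev_const hk0 s (fun m => by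
    have := hs (prevEquiv k m)
    rw [Equiv.symm_apply_apply] at this
    exact this.symm))] at hS'
  rw [permM_one, mul_one] at h1
  simp only [Equiv.refl_apply, implies_true, if_true] at h1
  have h1' : ∑ s : Fin k → Bool, ∏ m, c m (s m) = ∏ m, ∑ b, c m b := by
    rw [Finset.prod_univ_sum, Fintype.piFinset_univ]
  have hc1 : ∏ m, ∑ b, c m b = (1 - (1 - (lam : ℂ)) * ε) ^ t := by
    have : ∀ m : Fin k, ∑ b, c m b = if m.val < t then (1 - (1 - (lam : ℂ)) * ε) else 1 := by
      intro m
      by_cases h : m.val < t <;> simp [c, h]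
      ring
    simp only [this]
    rw [prod_ite_lt ht2]; simp
  have hc2 : ∑ b, ∏ m, c m b = (1 - (ε : ℂ)) ^ k + (lam : ℂ) ^ t * (ε : ℂ) ^ k := by
    simp only [Fintype.sum_bool, c, if_true, Bool.false_eq_true, if_false]
    rw [prod_ite_lt ht2, mul_pow, mul_assoc, ← pow_add, Nat.add_sub_cancel' ht2]
    simp [add_comm]
  rw [h1', hc1] at h1
  rw [hc2] at hS hS'
  have hexp : tensOp (fun m : Fin k => if m.val < t then Ω else 1)
        * (Dk d k * tensOp (fun _ : Fin k => σ) * (Dk d k)ᴴ)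
      = (1 / 4 : ℂ) • (tensOp A + tensOp A * permM d (prevEquiv k)
          + tensOp A * permM d (prevEquiv k).symm + tensOp A) := by
    have hD : (Dk d k)ᴴ = (1 / 2 : ℂ) • (1 + permM d (prevEquiv k).symm) := by
      simp [Dk, conjTranspose_smul, cyc_eq_s14, permM_H]
    have hO : tensOp A = tensOp (fun m : Fin k => if m.val < t then Ω else 1)
        * tensOp (fun _ : Fin k => σ) := by rw [tensOp_mul]
    rw [hD, hO, Dk, cyc_eq_s14]
    generalize tensOp (fun m : Fin k => if m.val < t then Ω else 1) = O
    have hc := permM_comm (prevEquiv k) σ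
    have hi := permM_inv (d := d) (prevEquiv k)
    generalize tensOp (fun _ : Fin k => σ) = R at *
    generalize permM d (prevEquiv k) = S at *
    generalize permM d (prevEquiv k).symm = T at *
    simp only [smul_mul_assoc, mul_smul_comm, smul_smul, add_mul, mul_add, one_mul, mul_one, hc]
    rw [mul_assoc R S T, hi, mul_one]
    simp only [smul_add, ← mul_assoc]
    module
  rw [hexp, trace_smul, trace_add, trace_add, trace_add, h1, hS, hS']
  push_cast
  simp only [smul_eq_mul]
  ring
end
end
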